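/- arXiv:0707.3104 — 3 statements merged into one kernel-verified Lean document; each statement's English description precedes it below -/
import Mathlib

section
/- Let m ≥ 1 and 0 ≤ l ≤ m be integers. Then the 2-adic valuation of A_{l,m} is given by ν₂(A_{l,m}) = 3l − s₂(m+l) + s₂(m−l). Equivalently, stated without the division by 2^{m−l}: ν₂(l! · m! · b_{l,m}) = (m − l) + 3l − s₂(m+l) + s₂(m−l). -/
/-- The sequence `b_{l,m}` from the paper. -/
def blm (l m : ℕ) : ℕ :=
  ∑ k ∈ Finset.Icc l m,
    2 ^ k * Nat.choose (2 * m - 2 * k) (m - k) * Nat.choose (m + k) m * Nat.choose k l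

/-!
The coefficients of `P = ∑ k ≤ m, 2 ^ k * C(2 * m - 2 * k, m - k) * C(m + k, m) * X ^ k` form
a hypergeometric sequence, so `P` satisfies a second-order differential equation,
`D ((X ^ 2 - 2 * X) D P) + (2 * m + 1) D P = m (m + 1) P`. As `b_{l,m}` is the coefficient of
`X ^ l` in `P (X + 1)`, and the shift turns `X ^ 2 - 2 * X` into `X ^ 2 - 1`, this is a three-term
recurrence for `b_{l,m}` in `l`. Run downwards from `b_{m+1,m} = 0`, and after division by
`2 ^ m (m + l)! / (l! m! (m - l)!)`, it produces integers which are all odd, since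
`(d + 1) (2 * m - d)` is always even. Hence `l! m! b_{l,m}` has the 2-adic valuation of
`2 ^ m (m + l)! / (m - l)!`, which Legendre's formula expresses through digit sums.
-/

theorem succ_mul_choose_add_succ (m k : ℕ) :
    (k + 1) * (m + (k + 1)).choose m = (m + k + 1) * (m + k).choose m := by
  rw [Nat.choose_symm_add, Nat.choose_symm_add, Nat.add_one_mul_choose_eq, mul_comm, add_assoc]

theorem sub_one_mul_padicValNat_factorial_cast (p : ℕ) [Fact p.Prime] (n : ℕ) :
    ((p : ℤ) - 1) * padicValNat p n.factorial = n - (Nat.digits p n).sum := by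
  have h := sub_one_mul_padicValNat_factorial (p := p) n
  rw [← Nat.cast_sub (Nat.digit_sum_le p n), ← h, Nat.cast_mul,
    Nat.cast_pred (Fact.out : p.Prime).pos]

theorem padicValNat_mul_of_not_dvd {p : ℕ} [Fact p.Prime] (a : ℕ) {b : ℕ} (hb : ¬p ∣ b) :
    padicValNat p (a * b) = padicValNat p a := by
  rcases eq_or_ne a 0 with rfl | ha
  · rw [zero_mul]
  · have hb_ne : b ≠ 0 := by
      rintro rfl
      exact hb (dvd_zero p)
    rw [padicValNat.mul ha hb_ne, padicValNat.eq_zero_of_not_dvd hb, add_zero]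

section Polynomial

open Polynomial

variable {R : Type*}

theorem coeff_X_mul_derivative [Semiring R] (p : R[X]) (n : ℕ) :
    (X * derivative p).coeff n = p.coeff n * n := by
  cases n with
  | zero => simp
  | succ n => rw [coeff_X_mul, coeff_derivative, Nat.cast_succ]

theorem coeff_derivative_X_mul_derivative [Semiring R] (p : R[X]) (n : ℕ) :
    (derivative (X * derivative p)).coeff n = p.coeff (n + 1) * (n + 1) * (n + 1) := by
  rw [coeff_derivative, coeff_X_mul_derivative, Nat.cast_succ]

theorem coeff_derivative_X_sq_mul_derivative [Semiring R] (p : R[X]) (n : ℕ) :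
    (derivative (X ^ 2 * derivative p)).coeff n = p.coeff n * n * (n + 1) := by
  rw [coeff_derivative, pow_two, mul_assoc, coeff_X_mul, coeff_X_mul_derivative]

theorem derivative_taylor [CommSemiring R] (r : R) (p : R[X]) :
    derivative (taylor r p) = taylor r (derivative p) := by
  simp only [taylor_apply, derivative_comp, derivative_add, derivative_X, derivative_C, add_zero,
    one_mul]

theorem coeff_recurrence_of_jacobi [CommRing R] {p : R[X]} {a b : R}
    (h : derivative ((X ^ 2 - 1) * derivative p) + C a * derivative p = C b * p) (n : ℕ) :
    (n + 1) * (n + 2) * p.coeff (n + 2) - a * (n + 1) * p.coeff (n + 1)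
      + (b - n * (n + 1)) * p.coeff n = 0 := by
  have h_coeff := congrArg (coeff · n) h
  simp only [sub_mul, one_mul, derivative_sub, coeff_add, coeff_sub, coeff_C_mul,
    coeff_derivative_X_sq_mul_derivative] at h_coeff
  simp only [coeff_derivative, Nat.cast_succ] at h_coeff
  linear_combination -h_coeff

end Polynomial

section BorosMoll

open Polynomial

/-- The Boros–Moll polynomial, multiplied by `4 ^ m` to have integer coefficients and with `X`
standing for `X + 1`: its Taylor expansion at `1` is the polynomial with coefficients `blm l m`. -/
noncomputable def shiftedBorosMoll (m : ℕ) : ℤ[X] :=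
  ∑ k ∈ Finset.range (m + 1),
    monomial k ((2 ^ k * (m - k).centralBinom * (m + k).choose m : ℕ) : ℤ)

theorem coeff_shiftedBorosMoll_of_le {m k : ℕ} (hk : k ≤ m) :
    (shiftedBorosMoll m).coeff k = 2 ^ k * (m - k).centralBinom * (m + k).choose m := by
  simp [shiftedBorosMoll, coeff_monomial, Nat.lt_succ_of_le hk]

theorem coeff_shiftedBorosMoll_of_lt {m k : ℕ} (hk : m < k) :
    (shiftedBorosMoll m).coeff k = 0 := by
  simp [shiftedBorosMoll, coeff_monomial, hk]

theorem coeff_taylor_shiftedBorosMoll (m l : ℕ) :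
    (taylor 1 (shiftedBorosMoll m)).coeff l = blm l m := by
  have h_subset : Finset.Icc l m ⊆ Finset.range (m + 1) := fun k hk ↦ by
    simp only [Finset.mem_Icc, Finset.mem_range] at hk ⊢
    lia
  rw [blm, Finset.sum_subset h_subset fun k hk hkl ↦ ?_]
  · simp only [shiftedBorosMoll, map_sum, taylor_monomial, finsetSum_coeff, coeff_C_mul, C_1,
      coeff_X_add_one_pow, Nat.centralBinom, Nat.mul_sub]
    push_cast
    rfl
  · simp only [Finset.mem_Icc, Finset.mem_range] at hk hkl
    rw [Nat.choose_eq_zero_of_lt (show k < l by lia), mul_zero]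

theorem coeff_shiftedBorosMoll_succ (m k : ℕ) :
    (k + 1) * (2 * m - 2 * k - 1) * (shiftedBorosMoll m).coeff (k + 1)
      = (m - k) * (m + k + 1) * (shiftedBorosMoll m).coeff k := by
  rcases lt_trichotomy k m with hk | rfl | hk
  · obtain ⟨n, rfl⟩ := Nat.exists_eq_add_of_lt hk
    have h_central := Nat.succ_mul_centralBinom_succ n
    have h_choose := succ_mul_choose_add_succ (k + n + 1) k
    rw [coeff_shiftedBorosMoll_of_le (Nat.succ_le_of_lt hk),
      coeff_shiftedBorosMoll_of_le hk.le, Nat.succ_eq_add_one,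
      show k + n + 1 - (k + 1) = n by lia, show k + n + 1 - k = n + 1 by lia]
    zify at h_central h_choose
    push_cast
    linear_combination 2 ^ (k + 1) * (2 * n + 1) * (n.centralBinom : ℤ) * h_choose
      - 2 ^ k * (k + n + 1 + k + 1) * ((k + n + 1 + k).choose (k + n + 1) : ℤ) * h_central
  · simp [coeff_shiftedBorosMoll_of_lt]
  · simp [coeff_shiftedBorosMoll_of_lt hk, coeff_shiftedBorosMoll_of_lt (hk.trans k.lt_succ_self)]

theorem shiftedBorosMoll_differential_equation (m : ℕ) :
    derivative ((X ^ 2 - 2 * X) * derivative (shiftedBorosMoll m))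
        + C (2 * m + 1 : ℤ) * derivative (shiftedBorosMoll m)
      = C (m * (m + 1) : ℤ) * shiftedBorosMoll m := by
  ext k
  rw [← C_ofNat]
  simp only [sub_mul, mul_assoc, derivative_sub, derivative_C_mul, coeff_add, coeff_sub,
    coeff_C_mul, coeff_derivative_X_sq_mul_derivative, coeff_derivative_X_mul_derivative]
  rw [coeff_derivative]
  linear_combination coeff_shiftedBorosMoll_succ m k

theorem taylor_shiftedBorosMoll_differential_equation (m : ℕ) :
    derivative ((X ^ 2 - 1) * derivative (taylor 1 (shiftedBorosMoll m)))
        + C (2 * m + 1 : ℤ) * derivative (taylor 1 (shiftedBorosMoll m))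
      = C (m * (m + 1) : ℤ) * taylor 1 (shiftedBorosMoll m) := by
  have h_shift : taylor (1 : ℤ) (X ^ 2 - 2 * X) = X ^ 2 - 1 := by
    rw [← C_ofNat, map_sub, taylor_mul, taylor_X_pow, taylor_C, taylor_X, C_1, C_ofNat]
    ring
  have h := congrArg (taylor 1) (shiftedBorosMoll_differential_equation m)
  rwa [map_add, ← derivative_taylor, taylor_mul, taylor_mul, taylor_mul, h_shift, taylor_C,
    taylor_C, ← derivative_taylor] at h

end BorosMoll

theorem blm_recurrence (m l : ℕ) :
    ((l : ℤ) + 1) * (l + 2) * blm (l + 2) m - (2 * m + 1) * (l + 1) * blm (l + 1) m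
      + (m + l + 1) * (m - l) * blm l m = 0 := by
  have h := coeff_recurrence_of_jacobi (taylor_shiftedBorosMoll_differential_equation m) l
  simp only [coeff_taylor_shiftedBorosMoll] at h
  linear_combination h

theorem blm_eq_zero_of_lt {m l : ℕ} (h : m < l) : blm l m = 0 := by
  rw [blm, Finset.Icc_eq_empty (not_le_of_gt h), Finset.sum_empty]

theorem blm_self_mul_factorial (m : ℕ) :
    blm m m * (m.factorial * m.factorial) = 2 ^ m * (2 * m).factorial := by
  rw [two_mul m, ← Nat.add_choose_mul_factorial_mul_factorial m m]
  simp [blm, mul_assoc]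

/-- The odd cofactor `l! m! (m - l)! b_{l,m} / (2 ^ m (m + l)!)`, as a function of `d = m - l ≤ m`;
the recurrence is that of `b_{l,m}`, read in the direction of decreasing `l`. -/
def blmOddPart (m : ℕ) : ℕ → ℤ
  | 0 => 1
  | 1 => 2 * m + 1
  | d + 2 => (2 * m + 1) * blmOddPart m (d + 1) - (d + 1) * (2 * m - d) * blmOddPart m d

theorem odd_blmOddPart (m d : ℕ) : Odd (blmOddPart m d) := by
  induction d using Nat.twoStepInduction with
  | zero => exact odd_one
  | one => exact odd_two_mul_add_one _
  | more d _ ih_succ =>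
    have h_even : Even (((d : ℤ) + 1) * (2 * m - d)) := by
      rcases Int.even_or_odd (d : ℤ) with hd | hd
      · exact ((even_two_mul _).sub hd).mul_left _
      · exact hd.add_one.mul_right _
    exact ((odd_two_mul_add_one _).mul ih_succ).sub_even (h_even.mul_right _)

theorem blm_mul_factorial {m l d : ℕ} (h : l + d = m) :
    (blm l m : ℤ) * (l.factorial * m.factorial * d.factorial)
      = 2 ^ m * (m + l).factorial * blmOddPart m d := by
  induction d using Nat.twoStepInduction generalizing l with
  | zero =>
    obtain rfl : l = m := h
    have h_self := blm_self_mul_factorial l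
    rw [two_mul] at h_self
    zify at h_self
    simpa [blmOddPart] using h_self
  | one =>
    subst h
    have h_self := blm_self_mul_factorial (l + 1)
    have h_rec := blm_recurrence (l + 1) l
    rw [blm_eq_zero_of_lt (l + 1).lt_succ_self] at h_rec
    rw [show 2 * (l + 1) = l + 1 + l + 1 by ring] at h_self
    simp only [Nat.factorial_succ, blmOddPart] at h_self ⊢
    zify at h_self
    apply mul_left_cancel₀ (show (l : ℤ) + 1 + l + 1 ≠ 0 by positivity)
    push_cast at h_rec ⊢
    linear_combination (l.factorial * (l + 1) * l.factorial : ℤ) * h_rec + (2 * l + 3) * h_self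
  | more d ih ih_succ =>
    have hm : (m : ℤ) = l + d + 2 := by lia
    have h_rec := blm_recurrence m l
    have h_one := ih_succ (l := l + 1) (by lia)
    have h_two := ih (l := l + 2) (by lia)
    apply mul_left_cancel₀ (show (m : ℤ) + l + 1 ≠ 0 by positivity)
    simp only [← add_assoc, Nat.factorial_succ, blmOddPart] at h_one h_two ⊢
    push_cast at h_one h_two ⊢
    rw [hm] at h_rec h_one h_two ⊢
    linear_combination (l.factorial * m.factorial * ((d + 1) * d.factorial) : ℤ) * h_rec
      + (2 * (l + d + 2) + 1) * h_one - (d + 1) * h_two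

theorem exists_odd_blm_mul_factorial {m l : ℕ} (hl : l ≤ m) :
    ∃ B : ℕ, Odd B ∧ l.factorial * m.factorial * blm l m * (m - l).factorial
      = 2 ^ m * (m + l).factorial * B := by
  refine ⟨(blmOddPart m (m - l)).natAbs, (odd_blmOddPart m (m - l)).natAbs, ?_⟩
  have h := congrArg Int.natAbs (blm_mul_factorial (Nat.add_sub_of_le hl))
  simp only [Int.natAbs_mul, Int.natAbs_pow, Int.natAbs_natCast, Int.reduceAbs] at h
  rw [← h]
  ring

/-- ν₂(l!·m!·b_{l,m}) = (m − l) + 3l − s₂(m+l) + s₂(m−l), i.e.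
ν₂(A_{l,m}) = 3l − s₂(m+l) + s₂(m−l). -/
theorem nu2_A_digits (m l : ℕ) (hm : 1 ≤ m) (hl : l ≤ m) :
    (padicValNat 2 (Nat.factorial l * Nat.factorial m * blm l m) : ℤ) =
      ((m : ℤ) - l) + 3 * l - ((Nat.digits 2 (m + l)).sum : ℤ)
        + ((Nat.digits 2 (m - l)).sum : ℤ) := by
  obtain ⟨B, h_odd, h⟩ := exists_odd_blm_mul_factorial hl
  have h_val := congrArg (padicValNat 2) h
  have h_ne : l.factorial * m.factorial * blm l m ≠ 0 := by
    refine left_ne_zero_of_mul (h ▸ mul_ne_zero ?_ h_odd.pos.ne')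
    positivity
  rw [padicValNat.mul h_ne (Nat.factorial_ne_zero _),
    padicValNat_mul_of_not_dvd _ h_odd.not_two_dvd_nat,
    padicValNat.mul (by positivity) (Nat.factorial_ne_zero _), padicValNat.prime_pow] at h_val
  have h_sub := sub_one_mul_padicValNat_factorial_cast 2 (m - l)
  have h_add := sub_one_mul_padicValNat_factorial_cast 2 (m + l)
  lia
end

section
/- For every integer n ≥ 3, the 2-adic valuation of the Stirling number S(n,3) equals 0 if n is odd, and equals 1 if n is even. -/
/-- Stirling numbers of the second kind, via the recurrence
`S(n+1,k+1) = S(n,k) + (k+1)·S(n,k+1)`. -/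
def stirling2 : ℕ → ℕ → ℕ
  | 0, 0 => 1
  | 0, _ + 1 => 0
  | _ + 1, 0 => 0
  | n + 1, k + 1 => stirling2 n k + (k + 1) * stirling2 n (k + 1)

/-!
Since `2 * S(n + 1, 3) = 3 ^ n + 1 - 2 ^ (n + 1)` and odd squares are `1` modulo `8`, for `n ≥ 2`
the right-hand side is `2` or `4` modulo `8` according as `n` is even or odd. Hence `S(n + 1, 3)` is
`1` or `2` modulo `4`, and these residues determine its 2-adic valuation.
-/

theorem padicValNat_eq_of_dvd_of_not_dvd {p n k : ℕ} (hk : p ^ k ∣ n) (hsucc : ¬p ^ (k + 1) ∣ n) :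
    padicValNat p n = k := by
  have hp : p ≠ 1 := by rintro rfl; simp at hsucc
  have hn : n ≠ 0 := by rintro rfl; simp at hsucc
  have h := padicValNat_eq_emultiplicity_of_ne_one hp hn
  rw [emultiplicity_eq_of_dvd_of_not_dvd hk hsucc] at h
  exact_mod_cast h

theorem pow_modEq_one_of_odd_of_even {a n : ℕ} (ha : Odd a) (hn : Even n) : a ^ n ≡ 1 [MOD 8] := by
  obtain ⟨m, rfl⟩ := even_iff_exists_two_mul.mp hn
  have hsq : a ^ 2 ≡ 1 [MOD 8] :=
    ((Nat.modEq_iff_dvd' (Nat.one_le_pow 2 a ha.pos)).mpr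
      (Nat.eight_dvd_sq_sub_one_of_odd ha)).symm
  simpa only [pow_mul, one_pow] using hsq.pow m

theorem pow_modEq_self_of_odd_of_odd {a n : ℕ} (ha : Odd a) (hn : Odd n) : a ^ n ≡ a [MOD 8] := by
  obtain ⟨m, rfl⟩ := hn
  simpa only [pow_succ, one_mul] using
    (pow_modEq_one_of_odd_of_even ha (even_two_mul m)).mul_right a

theorem stirling2_eq_stirlingSecond (n k : ℕ) : stirling2 n k = Nat.stirlingSecond n k := by
  induction n generalizing k with
  | zero => cases k <;> rfl
  | succ n ih =>
    cases k with
    | zero => rfl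
    | succ k => rw [stirling2, Nat.stirlingSecond_succ_succ, ih, ih, add_comm]

theorem stirlingSecond_two_right_add_one (n : ℕ) : Nat.stirlingSecond (n + 1) 2 + 1 = 2 ^ n := by
  induction n with
  | zero => rfl
  | succ n ih =>
    rw [Nat.stirlingSecond_succ_succ, Nat.stirlingSecond_one_right, pow_succ, ← ih]
    ring

theorem two_mul_stirlingSecond_three_right_add_two_pow (n : ℕ) :
    2 * Nat.stirlingSecond (n + 1) 3 + 2 ^ (n + 1) = 3 ^ n + 1 := by
  induction n with
  | zero => rfl
  | succ n ih =>
    have h := stirlingSecond_two_right_add_one n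
    rw [Nat.stirlingSecond_succ_succ]
    linear_combination 3 * ih + 2 * h

theorem two_mul_stirlingSecond_three_right_modEq (n : ℕ) :
    2 * Nat.stirlingSecond (n + 1) 3 ≡ 3 ^ n + 1 [MOD 2 ^ (n + 1)] := by
  rw [← two_mul_stirlingSecond_three_right_add_two_pow]
  exact Nat.add_modEq_right.symm

theorem two_mul_stirlingSecond_three_right_modEq_eight {n : ℕ} (hn : 2 ≤ n) :
    2 * Nat.stirlingSecond (n + 1) 3 ≡ 3 ^ n + 1 [MOD 8] :=
  (two_mul_stirlingSecond_three_right_modEq n).of_dvd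
    (pow_dvd_pow 2 (Nat.succ_le_succ hn))

theorem stirlingSecond_three_right_modEq_one_of_even {n : ℕ} (hn : 2 ≤ n) (heven : Even n) :
    Nat.stirlingSecond (n + 1) 3 ≡ 1 [MOD 4] := by
  have h : 2 * Nat.stirlingSecond (n + 1) 3 ≡ 2 * 1 [MOD 2 * 4] :=
    (two_mul_stirlingSecond_three_right_modEq_eight hn).trans
      ((pow_modEq_one_of_odd_of_even (by decide) heven).add_right 1)
  exact Nat.ModEq.mul_left_cancel' two_ne_zero h

theorem stirlingSecond_three_right_modEq_two_of_odd {n : ℕ} (hn : 2 ≤ n) (hodd : Odd n) :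
    Nat.stirlingSecond (n + 1) 3 ≡ 2 [MOD 4] := by
  have h : 2 * Nat.stirlingSecond (n + 1) 3 ≡ 2 * 2 [MOD 2 * 4] :=
    (two_mul_stirlingSecond_three_right_modEq_eight hn).trans
      ((pow_modEq_self_of_odd_of_odd (by decide) hodd).add_right 1)
  exact Nat.ModEq.mul_left_cancel' two_ne_zero h

/-- For n ≥ 3, ν₂(S(n,3)) = 0 if n is odd and = 1 if n is even. -/
theorem nu2_stirling_three (n : ℕ) (hn : 3 ≤ n) :
    (Odd n → padicValNat 2 (stirling2 n 3) = 0) ∧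
    (Even n → padicValNat 2 (stirling2 n 3) = 1) := by
  obtain ⟨m, rfl⟩ : ∃ m, n = m + 1 := Nat.exists_eq_add_of_le' (Nat.one_le_of_lt hn)
  have hm : 2 ≤ m := Nat.le_of_succ_le_succ hn
  rw [stirling2_eq_stirlingSecond]
  constructor
  · intro hodd
    have hmod := stirlingSecond_three_right_modEq_one_of_even hm (by grind)
    have hndvd : ¬2 ∣ Nat.stirlingSecond (m + 1) 3 := by
      rw [hmod.dvd_iff (by decide)]
      decide
    exact padicValNat.eq_zero_of_not_dvd hndvd
  · intro heven
    have hmod := stirlingSecond_three_right_modEq_two_of_odd hm (by grind)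
    apply padicValNat_eq_of_dvd_of_not_dvd
    · rw [hmod.dvd_iff (by decide)]
      decide
    · rw [hmod.dvd_iff (by decide)]
      decide
end

section
/- Let m ≥ 1 and N be integers with N ≥ m + 2, and set M = 2^m − 1. Then ν₂( Σ_{j=0}^{M} 5^{M−j} · S(N + j, 4) ) = m − 1. -/
/-!
Write `G_r = ∑_{j < n} r ^ j a ^ (n - 1 - j)`. The explicit formula for `S(N, 4)` gives
`24 ∑_{j < n} a ^ (n - 1 - j) S(N + j, 4) = 4 ^ N G₄ - 4 · 3 ^ N G₃ + 6 · 2 ^ N G₂ - 4 G₁`.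
Let `a` be odd and `m = ν₂(n) ≥ 1`. Lifting the exponent gives `ν₂(G_r) = ν₂(a + r) + m - 1` for
odd `r`. Exactly one of `a + 1`, `a + 3` is `2` modulo `4`, so `3 ^ N G₃ + G₁` has
valuation `m`, and the terms in `G₃` and `G₁` together have valuation `m + 2`. If `N ≥ m + 2`, the
terms in `G₄` and `G₂` are divisible by `2 ^ (m + 3)`, so the left-hand side has valuation `m + 2`,
of which `24` accounts for `3`.
-/

open Finset

open scoped Nat

lemma cast_mul_choose_succ (k i : ℕ) :
    (i * (k + 1).choose i : ℤ) = (k + 1) * ((k + 1).choose i - k.choose i) := by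
  cases i with
  | zero => simp
  | succ i =>
    have pascal : ((k + 1).choose (i + 1) : ℤ) = k.choose i + k.choose (i + 1) := by
      exact_mod_cast Nat.choose_succ_succ' k i
    have absorb : ((k + 1) * k.choose i : ℤ) = (k + 1).choose (i + 1) * (i + 1) := by
      exact_mod_cast Nat.add_one_mul_choose_eq k i
    push_cast
    linear_combination -absorb - (k + 1) * pascal

lemma sum_choose_mul_pow_succ (k n : ℕ) :
    ∑ i ∈ range (k + 2), (-1 : ℤ) ^ (k + 1 + i) * (k + 1).choose i * (i : ℤ) ^ (n + 1) =
      (k + 1) * (∑ i ∈ range (k + 1), (-1 : ℤ) ^ (k + i) * k.choose i * (i : ℤ) ^ n +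
        ∑ i ∈ range (k + 2), (-1 : ℤ) ^ (k + 1 + i) * (k + 1).choose i * (i : ℤ) ^ n) := by
  have extend : ∑ i ∈ range (k + 1), (-1 : ℤ) ^ (k + i) * k.choose i * (i : ℤ) ^ n =
      ∑ i ∈ range (k + 2), (-1 : ℤ) ^ (k + i) * k.choose i * (i : ℤ) ^ n := by
    simp [sum_range_succ _ (k + 1)]
  rw [extend, ← sum_add_distrib, mul_sum]
  refine sum_congr rfl fun i _ ↦ ?_
  linear_combination (-1) ^ (k + 1 + i) * (i : ℤ) ^ n * cast_mul_choose_succ k i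

lemma factorial_mul_stirling2 (k n : ℕ) :
    (k ! * stirling2 n k : ℤ) =
      ∑ i ∈ range (k + 1), (-1 : ℤ) ^ (k + i) * k.choose i * (i : ℤ) ^ n := by
  induction n generalizing k with
  | zero =>
    have alternating := Int.alternating_sum_range_choose (n := k)
    cases k with
    | zero => simp [stirling2]
    | succ k => simp [stirling2, pow_add _ (k + 1), mul_assoc, ← mul_sum, alternating]
  | succ n ih =>
    cases k with
    | zero => simp [stirling2]
    | succ k =>
      rw [sum_choose_mul_pow_succ, ← ih k, ← ih (k + 1), stirling2, Nat.factorial_succ]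
      push_cast
      ring

/-- The sum `x ^ (n - 1) + x ^ (n - 2) * y + ⋯ + y ^ (n - 1)`, i.e. the quotient of `x ^ n - y ^ n`
by `x - y` extended to `x = y`. The summand is in the form used by Mathlib's `geom_sum₂` lemmas. -/
def geomSum₂ {R : Type*} [Semiring R] (x y : R) (n : ℕ) : R :=
  ∑ j ∈ range n, x ^ j * y ^ (n - 1 - j)

lemma factorial_mul_sum_pow_mul_stirling2 (a : ℤ) (k n N : ℕ) :
    (k ! : ℤ) * ∑ j ∈ range n, a ^ (n - 1 - j) * stirling2 (N + j) k =
      ∑ i ∈ range (k + 1), (-1) ^ (k + i) * k.choose i * (i : ℤ) ^ N * geomSum₂ (i : ℤ) a n := by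
  simp only [geomSum₂, mul_sum]
  rw [sum_comm]
  refine sum_congr rfl fun j _ ↦ ?_
  rw [mul_left_comm, factorial_mul_stirling2, mul_sum]
  refine sum_congr rfl fun i _ ↦ ?_
  ring

lemma padicValNat_eq_of_emultiplicity_eq {p n k : ℕ} [Fact p.Prime]
    (h : emultiplicity p n = k) : padicValNat p n = k := by
  have ne_zero : n ≠ 0 := by
    rintro rfl
    exact ENat.natCast_ne_top k (h.symm.trans (emultiplicity_zero p))
  exact_mod_cast (padicValNat_eq_emultiplicity ne_zero).trans h

lemma emultiplicity_two_of_odd {w : ℤ} (hw : Odd w) : emultiplicity 2 w = 0 := by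
  rwa [emultiplicity_eq_zero, ← even_iff_two_dvd, Int.not_even_iff_odd]

lemma emultiplicity_two_odd_mul {w : ℤ} (hw : Odd w) (z : ℤ) :
    emultiplicity 2 (w * z) = emultiplicity 2 z := by
  rw [emultiplicity_mul Int.prime_two, emultiplicity_two_of_odd hw, zero_add]

lemma emultiplicity_pow_self_mul_of_prime {α : Type*} [CommMonoidWithZero α] [IsCancelMulZero α]
    {p : α} (hp : Prime p) (k : ℕ) (z : α) :
    emultiplicity p (p ^ k * z) = k + emultiplicity p z := by
  rw [emultiplicity_mul hp, emultiplicity_pow_self_of_prime hp]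

lemma emultiplicity_two_geomSum₂_add_one {x y : ℤ} {n : ℕ} (hx : Odd x) (hy : Odd y)
    (hn : Even n) :
    emultiplicity 2 (geomSum₂ x y n) + 1 = emultiplicity 2 (x + y) + emultiplicity 2 (n : ℤ) := by
  obtain rfl | hxy := eq_or_ne x y
  · have emult_two_mul : emultiplicity 2 (x + x) = 1 := by
      simpa [two_mul, emultiplicity_two_of_odd hx] using
        emultiplicity_pow_self_mul_of_prime Int.prime_two 1 x
    rw [geomSum₂, geom_sum₂_self, mul_comm, emultiplicity_two_odd_mul hx.pow, emult_two_mul,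
      add_comm]
  · have hx2 : ¬2 ∣ x := by rwa [← even_iff_two_dvd, Int.not_even_iff_odd]
    have lte := Int.two_pow_sub_pow (hx.sub_odd hy).two_dvd hx2 hn
    rw [← geom_sum₂_mul, emultiplicity_mul Int.prime_two] at lte
    have finite : emultiplicity 2 (x - y) ≠ ⊤ := finiteMultiplicity_iff_emultiplicity_ne_top.1 <|
      .of_prime_left Int.prime_two (sub_ne_zero.2 hxy)
    refine (ENat.addLECancellable_of_ne_top finite).inj_left.1 ?_
    rw [geomSum₂, add_right_comm, lte, add_right_comm]

lemma emultiplicity_two_geomSum₂_of_add_emod_four {x y : ℤ} {n : ℕ} (hx : Odd x) (hy : Odd y)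
    (hxy : (x + y) % 4 = 2) (hn : Even n) :
    emultiplicity 2 (geomSum₂ x y n) = emultiplicity 2 (n : ℤ) := by
  have emult_sum : emultiplicity 2 (x + y) = 1 :=
    emultiplicity_eq_coe (n := 1).2 (by omega)
  have key := emultiplicity_two_geomSum₂_add_one hx hy hn
  rw [emult_sum, add_comm] at key
  exact (ENat.addLECancellable_of_ne_top ENat.one_ne_top).inj.1 key

lemma emultiplicity_two_lt_geomSum₂_of_four_dvd_add {x y : ℤ} {n : ℕ} (hx : Odd x) (hy : Odd y)
    (hxy : 4 ∣ x + y) (hn : Even n) (hn0 : n ≠ 0) :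
    emultiplicity 2 (n : ℤ) < emultiplicity 2 (geomSum₂ x y n) := by
  have two_le : 2 ≤ emultiplicity 2 (x + y) := le_emultiplicity_of_pow_dvd (k := 2) hxy
  have finite : emultiplicity 2 (n : ℤ) ≠ ⊤ := finiteMultiplicity_iff_emultiplicity_ne_top.1 <|
    .of_prime_left Int.prime_two (Nat.cast_ne_zero.2 hn0)
  have add_two_le : emultiplicity 2 (n : ℤ) + 1 + 1 ≤ emultiplicity 2 (geomSum₂ x y n) + 1 := by
    rw [emultiplicity_two_geomSum₂_add_one hx hy hn, add_assoc, one_add_one_eq_two, add_comm]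
    gcongr
  exact (ENat.add_one_le_iff finite).1 <|
    (ENat.addLECancellable_of_ne_top ENat.one_ne_top).add_le_add_iff_right.1 add_two_le

lemma emultiplicity_two_add_geomSum₂ {x y a u v : ℤ} {n : ℕ} (hx : Odd x) (ha : Odd a)
    (hxy : (x - y) % 4 = 2) (hu : Odd u) (hv : Odd v) (hn : Even n) :
    emultiplicity 2 (u * geomSum₂ x a n + v * geomSum₂ y a n) = emultiplicity 2 (n : ℤ) := by
  obtain rfl | hn0 := eq_or_ne n 0
  · simp [geomSum₂]
  -- One of `x + a`, `y + a` is `2` modulo `4`; the other is divisible by `4`, so its sum has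
  -- the larger valuation.
  wlog hxa : (x + a) % 4 = 2 generalizing x y u v
  · rw [add_comm]
    exact this (by grind) (by grind) hv hu (by grind)
  have emult_x := emultiplicity_two_geomSum₂_of_add_emod_four hx ha hxa hn
  have emult_y := emultiplicity_two_lt_geomSum₂_of_four_dvd_add (x := y) (y := a) (by grind) ha
    (by omega) hn hn0
  rw [← emult_x, ← emultiplicity_two_odd_mul hu, ← emultiplicity_two_odd_mul hv (geomSum₂ _ _ _)]
    at emult_y
  rw [add_comm, emultiplicity_add_of_gt emult_y, emultiplicity_two_odd_mul hu, emult_x]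

lemma twenty_four_mul_sum_pow_mul_stirling2_four (a : ℤ) (n : ℕ) {N : ℕ} (hN : N ≠ 0) :
    24 * ∑ j ∈ range n, a ^ (n - 1 - j) * stirling2 (N + j) 4 =
      2 ^ (N + 1) * (3 * geomSum₂ 2 a n) + 2 ^ (2 * N) * geomSum₂ 4 a n -
        4 * (3 ^ N * geomSum₂ 3 a n + 1 ^ N * geomSum₂ 1 a n) := by
  have closed : 24 * ∑ j ∈ range n, a ^ (n - 1 - j) * stirling2 (N + j) 4 =
      -(4 * geomSum₂ 1 a n) + 6 * 2 ^ N * geomSum₂ 2 a n + -(4 * 3 ^ N * geomSum₂ 3 a n) +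
        4 ^ N * geomSum₂ 4 a n := by
    simpa [sum_range_succ _ 4, sum_range_succ _ 3, sum_range_succ _ 2, sum_range_succ _ 1,
      Nat.choose, Nat.factorial, hN] using factorial_mul_sum_pow_mul_stirling2 a 4 n N
  have four_pow : (4 : ℤ) ^ N = 2 ^ (2 * N) := by
    rw [pow_mul]
    norm_num
  linear_combination closed + geomSum₂ 4 a n * four_pow

theorem nu2_sum_stirling_four_general {a : ℤ} {m n N : ℕ} (ha : Odd a) (hm : 1 ≤ m)
    (hn : emultiplicity 2 n = m) (hN : m + 2 ≤ N) :
    emultiplicity 2 (∑ j ∈ range n, a ^ (n - 1 - j) * stirling2 (N + j) 4) = (m - 1 : ℕ) := by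
  have n_even : Even n := by
    rw [even_iff_two_dvd, ← emultiplicity_ne_zero, hn]
    exact_mod_cast Nat.one_le_iff_ne_zero.1 hm
  have emult_n : emultiplicity 2 (n : ℤ) = m := by
    exact_mod_cast (Int.natCast_emultiplicity 2 n).trans hn
  set T := ∑ j ∈ range n, a ^ (n - 1 - j) * (stirling2 (N + j) 4 : ℤ)
  set A := 2 ^ (N + 1) * (3 * geomSum₂ 2 a n) + 2 ^ (2 * N) * geomSum₂ 4 a n
  set B := 3 ^ N * geomSum₂ 3 a n + 1 ^ N * geomSum₂ 1 a n
  have closed : 2 ^ 3 * (3 * T) = A - 2 ^ 2 * B := by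
    linear_combination twenty_four_mul_sum_pow_mul_stirling2_four a n (N := N) (by omega)
  have emult_A : (m + 3 : ℕ) ≤ emultiplicity 2 A :=
    le_emultiplicity_of_pow_dvd <| dvd_add ((pow_dvd_pow 2 (by omega)).mul_right _)
      ((pow_dvd_pow 2 (by omega)).mul_right _)
  have emult_B : emultiplicity 2 (2 ^ 2 * B) = (m + 2 : ℕ) := by
    rw [emultiplicity_pow_self_mul_of_prime Int.prime_two,
      emultiplicity_two_add_geomSum₂ (by decide) ha (by decide) (Odd.pow (by decide)) odd_one.pow
        n_even, emult_n, add_comm, Nat.cast_add]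
  have emult_B_lt : emultiplicity 2 (2 ^ 2 * B) < emultiplicity 2 A :=
    lt_of_lt_of_le (emult_B ▸ by exact_mod_cast Nat.lt_succ_self (m + 2)) emult_A
  have emult_T : 3 + emultiplicity 2 T = (m + 2 : ℕ) := by
    rw [← emult_B, ← emultiplicity_sub_of_gt emult_B_lt, ← closed,
      emultiplicity_pow_self_mul_of_prime Int.prime_two, emultiplicity_two_odd_mul (by decide),
      Nat.cast_ofNat]
  rw [show m + 2 = 3 + (m - 1) by omega, Nat.cast_add] at emult_T
  exact (ENat.addLECancellable_natCast 3).inj.1 emult_T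

/-- For m ≥ 1 and N ≥ m + 2, with M = 2^m − 1,
ν₂(Σ_{j=0}^{M} 5^{M−j}·S(N+j,4)) = m − 1. -/
theorem nu2_sum_stirling_four (m N M : ℕ) (hm : 1 ≤ m) (hN : m + 2 ≤ N)
    (hM : M = 2 ^ m - 1) :
    padicValNat 2 (∑ j ∈ Finset.range (M + 1), 5 ^ (M - j) * stirling2 (N + j) 4) =
      m - 1 := by
  have hM_succ : M + 1 = 2 ^ m := hM ▸ Nat.sub_add_cancel Nat.one_le_two_pow
  refine padicValNat_eq_of_emultiplicity_eq ?_
  rw [← Int.natCast_emultiplicity]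
  exact_mod_cast nu2_sum_stirling_four_general (a := 5) (n := M + 1) (by decide) hm
    (hM_succ ▸ emultiplicity_pow_self_of_prime Nat.prime_two.prime m) hN
end
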